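/- For coprime positive integers s ≥ 2 and t, the sum over all self-conjugate (s,t)-cores λ of the reciprocal of the order of the stabiliser of λ under the level-t action of the affine hyperoctahedral group H̃_s on self-conjugate s-cores equals t^u/(2^u · u!), where u = ⌊s/2⌋. -/

import Mathlib

/-- A partition: a weakly decreasing, eventually-zero sequence of naturals
(0-indexed: `f i` is the `(i+1)`-th part). -/
structure Partn where
  f : ℕ → ℕ
  antitone : Antitone f
  eventually_zero : ∃ N, ∀ i, N ≤ i → f i = 0

/-- The beta-set `B(λ) = {λ_i - i : i ≥ 1}`. -/
def betaSet (p : Partn) : Set ℤ := {b | ∃ i : ℕ, b = (p.f i : ℤ) - (i + 1)}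

/-- `conjCount p j` is the `(j+1)`-th part of the conjugate partition. -/
noncomputable def conjCount (p : Partn) (j : ℕ) : ℕ := Set.ncard {i : ℕ | j + 1 ≤ p.f i}

/-- Hook length of the cell in row `r+1`, column `c+1` (1-indexed formula
`1 + (λ_r - r) + (λ'_c - c)`). -/
noncomputable def hookLen (p : Partn) (r c : ℕ) : ℤ :=
  1 + ((p.f r : ℤ) - (r + 1)) + ((conjCount p c : ℤ) - (c + 1))

/-- `p` is an `s`-core: no hook length is divisible by `s`. -/
def IsCore (s : ℕ) (p : Partn) : Prop :=
  ∀ r c : ℕ, c < p.f r → ¬ ((s : ℤ) ∣ hookLen p r c)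

/-- `p` is self-conjugate. -/
def SelfConj (p : Partn) : Prop := ∀ j, p.f j = conjCount p j

/-- The `s`-set of an `s`-core: `S(λ) = (B(λ)+s) \ B(λ)`. -/
def sSet (s : ℕ) (p : Partn) : Set ℤ := {x | x - s ∈ betaSet p ∧ x ∉ betaSet p}

/-- An `s`-set: `s` integers, pairwise incongruent mod `s`, summing to `C(s,2)`. -/
def IsSSet (s : ℕ) (X : Set ℤ) : Prop :=
  X.ncard = s ∧ (∀ a ∈ X, ∀ b ∈ X, a ≠ b → ¬ ((s : ℤ) ∣ (a - b))) ∧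
    (∑ᶠ x ∈ X, x) = (s.choose 2 : ℤ)

/-- The affine symmetric group `W̃_s`, as a set of permutations of `ℤ`:
`w(m+s) = w(m)+s` and `w(0)+⋯+w(s-1) = C(s,2)`. -/
def AffSymSet (s : ℕ) : Set (Equiv.Perm ℤ) :=
  {w | (∀ m : ℤ, w (m + s) = w m + s) ∧
    (∑ i ∈ Finset.range s, w (i : ℤ)) = (s.choose 2 : ℤ)}

/-- The underlying function of the Coxeter generator `w_i` of `W̃_s`, where `a = i - 1`:
swaps `m` and `m+1` whenever `m ≡ i - 1 (mod s)`. -/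
def genFun (s : ℕ) (a : ℤ) : ℤ → ℤ := fun m =>
  if (s : ℤ) ∣ (m - a) then m + 1 else if (s : ℤ) ∣ (m - a - 1) then m - 1 else m

lemma genFun_involutive (s : ℕ) (hs : 2 ≤ s) (a : ℤ) :
    Function.Involutive (genFun s a) := by
  have h1 : ¬ ((s : ℤ) ∣ 1) := by
    intro h
    have := Int.le_of_dvd one_pos h
    omega
  intro m
  unfold genFun
  by_cases hA : (s : ℤ) ∣ (m - a)
  · rw [if_pos hA]
    have hB : ¬ (s : ℤ) ∣ (m + 1 - a) := by
      intro h
      have := dvd_sub h hA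
      rw [show m + 1 - a - (m - a) = 1 by ring] at this
      exact h1 this
    rw [if_neg hB, if_pos (by rw [show m + 1 - a - 1 = m - a by ring]; exact hA)]
    ring
  · rw [if_neg hA]
    by_cases hB : (s : ℤ) ∣ (m - a - 1)
    · rw [if_pos hB, if_pos (by rw [show m - 1 - a = m - a - 1 by ring]; exact hB)]
      ring
    · rw [if_neg hB, if_neg hA, if_neg hB]

/-- The Coxeter generator `w_i` of `W̃_s`, where `a = i - 1`. -/
def genPerm (s : ℕ) (hs : 2 ≤ s) (a : ℤ) : Equiv.Perm ℤ :=
  (genFun_involutive s hs a).toPerm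

/-- The constant `c = (s-1)(t-1)/2`. -/
def lc (s t : ℕ) : ℤ := (((s : ℤ) - 1) * ((t : ℤ) - 1)) / 2

/-- The image `ẘ_i` of the generator `w_i` under the level `t` action on `ℤ`:
`m ↦ m + t` if `m ≡ (i-1)t - c (mod s)`, `m ↦ m - t` if `m ≡ it - c (mod s)`,
`m ↦ m` otherwise. -/
def levelGenFun (s t : ℕ) (i : ℤ) : ℤ → ℤ := fun m =>
  if (s : ℤ) ∣ (m - ((i - 1) * t - lc s t)) then m + t
  else if (s : ℤ) ∣ (m - (i * t - lc s t)) then m - t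
  else m

/-- `Φ` is (the restriction to `W̃_s` of) the level `t` action of `W̃_s` on `ℤ`:
a multiplicative map on `W̃_s` sending each generator `w_i` to `ẘ_i`. -/
def IsLevelTAction (s t : ℕ) (hs : 2 ≤ s) (Φ : Equiv.Perm ℤ → Equiv.Perm ℤ) : Prop :=
  (∀ w v : Equiv.Perm ℤ, w ∈ AffSymSet s → v ∈ AffSymSet s → Φ (w * v) = Φ w * Φ v) ∧
  (∀ i m : ℤ, Φ (genPerm s hs (i - 1)) m = levelGenFun s t i m)

/-- Removing a rim hook of length `t`, in terms of beta-sets: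
`μ` is obtained from `λ` by removing a rim `t`-hook. -/
def RemoveHook (t : ℕ) (p q : Partn) : Prop :=
  ∃ b ∈ betaSet p, b - t ∉ betaSet p ∧ betaSet q = insert (b - t) (betaSet p \ {b})

lemma lt_conjCount_iff (p : Partn) (i j : ℕ) : i < conjCount p j ↔ j < p.f i := by
  have hex : ∃ n, p.f n ≤ j := by
    obtain ⟨N, hN⟩ := p.eventually_zero
    exact ⟨N, by rw [hN N le_rfl]; exact Nat.zero_le _⟩
  have key : ∀ i, i < Nat.find hex ↔ j < p.f i := by
    intro i
    constructor
    · intro h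
      exact not_le.mp (Nat.find_min hex h)
    · intro h
      by_contra hc
      have := p.antitone (not_lt.mp hc)
      have h2 := Nat.find_spec hex
      omega
  have hset : {i : ℕ | j + 1 ≤ p.f i} = Set.Iio (Nat.find hex) := by
    ext i
    exact (key i).symm
  have hcount : conjCount p j = Nat.find hex := by
    unfold conjCount
    rw [hset, ← Finset.coe_Iio, Set.ncard_coe_finset, Nat.card_Iio]
  rw [hcount, key]

lemma exists_beta_lt (p : Partn) (b : ℤ) : ∃ i : ℕ, (p.f i : ℤ) - (i + 1) < b := by
  obtain ⟨N, hN⟩ := p.eventually_zero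
  refine ⟨N + b.natAbs, ?_⟩
  rw [hN _ (Nat.le_add_right _ _)]
  push_cast
  have := neg_abs_le b
  omega

lemma notMem_betaSet_iff (p : Partn) (b : ℤ) :
    b ∉ betaSet p ↔ ∃ c : ℕ, b = (c : ℤ) - conjCount p c := by
  classical
  constructor
  · intro hb
    have hex := exists_beta_lt p b
    have hi := Nat.find_spec hex
    have hmin : ∀ j, j < Nat.find hex → ¬ ((p.f j : ℤ) - (j + 1) < b) :=
      fun j hj => Nat.find_min hex hj
    generalize Nat.find hex = i at hi hmin
    obtain ⟨c, hc⟩ := Int.eq_ofNat_of_zero_le (show 0 ≤ b + i by omega)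
    refine ⟨c, ?_⟩
    have hcount : conjCount p c = i := by
      have h1 : ¬ i < conjCount p c := by
        rw [lt_conjCount_iff]; omega
      have h2 : ∀ j, j < i → j < conjCount p c := by
        intro j hj
        rw [lt_conjCount_iff]
        have h3 := hmin (i - 1) (by omega)
        have h4 : b ≠ (p.f (i - 1) : ℤ) - ((i - 1 : ℕ) + 1) := fun h => hb ⟨i - 1, h⟩
        have h5 := p.antitone (show j ≤ i - 1 by omega)
        omega
      rcases Nat.eq_zero_or_pos i with h0 | h0
      · omega
      · have := h2 (i - 1) (by omega)
        omega
    omega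
  · rintro ⟨c, rfl⟩ ⟨i, hi⟩
    have := lt_conjCount_iff p i c
    by_cases h : c < p.f i
    · have := this.mpr h
      omega
    · have : ¬ i < conjCount p c := fun h' => h (this.mp h')
      omega

lemma isCore_iff (s : ℕ) (hs : 0 < s) (p : Partn) :
    IsCore s p ↔ ∀ b ∈ betaSet p, b - s ∈ betaSet p := by
  have hook : ∀ r c : ℕ, hookLen p r c =
      ((p.f r : ℤ) - (r + 1)) - ((c : ℤ) - conjCount p c) := by
    intro r c
    unfold hookLen
    ring
  constructor
  · rintro h b ⟨r, rfl⟩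
    by_contra hb
    obtain ⟨c, hc⟩ := (notMem_betaSet_iff _ _).mp hb
    have h1 := h r c
    rw [hook, ← hc] at h1
    apply h1
    · by_contra h2
      have h3 : ¬ r < conjCount p c := by rwa [lt_conjCount_iff]
      omega
    · exact ⟨1, by ring⟩
  · intro h r c hrc ⟨q, hq⟩
    rw [hook] at hq
    have hr := (lt_conjCount_iff p r c).mpr hrc
    have hpos : 0 < (s : ℤ) * q := by rw [← hq]; omega
    have hq0 : 0 < q := pos_of_mul_pos_right hpos (by positivity)
    have step : ∀ n : ℕ, (p.f r : ℤ) - (r + 1) - s * n ∈ betaSet p := by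
      intro n
      induction n with
      | zero => exact ⟨r, by simp⟩
      | succ n ih =>
        have := h _ ih
        rwa [show (p.f r : ℤ) - (r + 1) - s * n - s = p.f r - (r + 1) - s * (n + 1 : ℕ) by
          push_cast; ring] at this
    obtain ⟨n, rfl⟩ := Int.eq_ofNat_of_zero_le hq0.le
    have h1 := step n
    rw [← hq] at h1
    refine (notMem_betaSet_iff p ((p.f r : ℤ) - (r + 1) -
      ((p.f r : ℤ) - (r + 1) - (c - conjCount p c)))).mpr ⟨c, by ring⟩ h1

lemma conjCount_antitone (p : Partn) : Antitone (conjCount p) := by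
  intro a b hab
  by_contra h
  have h1 := (lt_conjCount_iff p (conjCount p a) b).mp (by omega)
  have h2 := (lt_conjCount_iff p (conjCount p a) a).mpr (by omega)
  omega

lemma eq_of_range_sub_eq {f g : ℕ → ℕ} (hf : Antitone f) (hg : Antitone g)
    (h : Set.range (fun i : ℕ => (i : ℤ) - f i) = Set.range (fun i : ℕ => (i : ℤ) - g i)) :
    f = g := by
  have mono : ∀ {f : ℕ → ℕ}, Antitone f → StrictMono (fun i : ℕ => (i : ℤ) - f i) := by
    intro f hf a b hab
    have := hf hab.le
    change (a : ℤ) - f a < b - f b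
    omega
  have h1 := (StrictMono.range_inj (mono hf) (mono hg)).mp h
  funext i
  have : (i : ℤ) - f i = i - g i := congrFun h1 i
  omega

lemma Partn.ext_f {p q : Partn} (h : p.f = q.f) : p = q := by
  cases p; cases q; simp only at h; subst h; rfl

lemma betaSet_injective {p q : Partn} (h : betaSet p = betaSet q) : p = q := by
  apply Partn.ext_f
  apply eq_of_range_sub_eq p.antitone q.antitone
  ext b
  have h1 : -1 - b ∈ betaSet p ↔ -1 - b ∈ betaSet q := by rw [h]
  simp only [betaSet, Set.mem_ofPred_eq] at h1
  simp only [Set.mem_range]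
  constructor
  · rintro ⟨i, hi⟩
    obtain ⟨j, hj⟩ := h1.mp ⟨i, by omega⟩
    exact ⟨j, by omega⟩
  · rintro ⟨i, hi⟩
    obtain ⟨j, hj⟩ := h1.mpr ⟨i, by omega⟩
    exact ⟨j, by omega⟩

lemma selfConj_iff (p : Partn) :
    SelfConj p ↔ ∀ b, b ∈ betaSet p ↔ -1 - b ∉ betaSet p := by
  constructor
  · intro h b
    rw [notMem_betaSet_iff]
    constructor
    · rintro ⟨i, rfl⟩
      exact ⟨i, by rw [← h i]; ring⟩
    · rintro ⟨i, hi⟩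
      exact ⟨i, by rw [h i]; omega⟩
  · intro h
    apply congrFun
    apply eq_of_range_sub_eq p.antitone (conjCount_antitone p)
    ext b
    have h1 := notMem_betaSet_iff p b
    have h2 := h (-1 - b)
    rw [show -1 - (-1 - b) = b by ring, h1] at h2
    simp only [betaSet, Set.mem_ofPred_eq] at h2
    simp only [Set.mem_range]
    constructor
    · rintro ⟨i, hi⟩
      obtain ⟨j, hj⟩ := h2.mp ⟨i, by omega⟩
      exact ⟨j, by omega⟩
    · rintro ⟨i, hi⟩
      obtain ⟨j, hj⟩ := h2.mpr ⟨i, by omega⟩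
      exact ⟨j, by omega⟩

/-- A symmetric set of integers containing all sufficiently negative integers is a beta-set. -/
lemma exists_betaSet_eq (B : Set ℤ) (hsymm : ∀ b, b ∈ B ↔ -1 - b ∉ B) (K : ℕ)
    (hK : ∀ b : ℤ, b < -K → b ∈ B) : ∃ p : Partn, betaSet p = B := by
  classical
  set P : ℕ → Prop := fun n => (K : ℤ) - 1 - n ∈ B with hP
  have hup : ∀ b : ℤ, b ∈ B → b < K := by
    intro b hb
    by_contra hc
    exact (hsymm b).mp hb (hK _ (by omega))
  have hlarge : ∀ n, 2 * K ≤ n → P n := fun n hn => hK _ (by omega)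
  have hinf : (Set.ofPred P).Infinite := by
    intro hfin
    obtain ⟨M, hM⟩ := hfin.bddAbove
    have := hM (hlarge (2 * K + M + 1) (by omega))
    omega
  have hPsymm : ∀ n, n < 2 * K → (P n ↔ ¬ P (2 * K - 1 - n)) := by
    intro n hn
    simp only [hP]
    rw [hsymm, show -1 - ((K : ℤ) - 1 - n) = K - 1 - ((2 * K - 1 - n : ℕ) : ℤ) by omega]
  have hcount0 : Nat.count P (2 * K) = K := by
    have e1 : Nat.count P (2 * K) = ∑ n ∈ Finset.range (2 * K), if P n then 1 else 0 := by
      rw [Nat.count_eq_card_filter_range, Finset.card_filter]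
    have e2 := Finset.sum_range_reflect (fun n => if P n then 1 else 0) (2 * K)
    have e3 : ∑ n ∈ Finset.range (2 * K), ((if P n then 1 else 0) +
        (if P (2 * K - 1 - n) then 1 else 0)) = 2 * K := by
      rw [Finset.sum_congr rfl (g := fun _ => 1)]
      · simp
      · intro n hn
        have := hPsymm n (Finset.mem_range.mp hn)
        split_ifs <;> first | rfl | (exfalso; tauto)
    rw [Finset.sum_add_distrib, e2, ← e1] at e3
    omega
  have hcount : ∀ i, Nat.count P (2 * K + i) = K + i := by
    intro i
    induction i with
    | zero => exact hcount0
    | succ i ih =>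
      rw [← add_assoc, Nat.count_succ, ih, if_pos (hlarge _ (by omega))]
      ring
  have hnth : ∀ i, Nat.nth P (K + i) = 2 * K + i := by
    intro i
    rw [← hcount i]
    exact Nat.nth_count (hlarge _ (by omega))
  have hmono := Nat.nth_strictMono hinf
  have hbound : ∀ i, Nat.nth P i ≤ K + i := by
    intro i
    have h1 : ∀ d, Nat.nth P i + d ≤ Nat.nth P (i + d) := by
      intro d
      induction d with
      | zero => simp
      | succ d ih =>
        have := hmono (show i + d < i + (d + 1) by omega)
        omega
    have h2 := h1 K
    rw [add_comm i K, hnth] at h2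
    omega
  refine ⟨⟨fun i => K + i - Nat.nth P i, ?_, K, ?_⟩, ?_⟩
  · apply antitone_nat_of_succ_le
    intro i
    have := hmono (show i < i + 1 by omega)
    omega
  · intro i hi
    obtain ⟨d, rfl⟩ := Nat.exists_eq_add_of_le hi
    rw [hnth]
    omega
  · ext b
    simp only [betaSet, Set.mem_ofPred_eq]
    constructor
    · rintro ⟨i, rfl⟩
      have h1 := Nat.nth_mem_of_infinite hinf i
      have h2 := hbound i
      simp only [hP] at h1
      rwa [show ((K + i - Nat.nth P i : ℕ) : ℤ) - (i + 1) = K - 1 - Nat.nth P i by omega]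
    · intro hb
      have hlt := hup b hb
      obtain ⟨n, hn⟩ := Int.eq_ofNat_of_zero_le (show 0 ≤ K - 1 - b by omega)
      have hPn : P n := by
        simp only [hP]
        rwa [show (K : ℤ) - 1 - n = b by omega]
      refine ⟨Nat.count P n, ?_⟩
      have h2 := hbound (Nat.count P n)
      rw [Nat.nth_count hPn] at h2 ⊢
      omega

lemma quasiperiodic_mul {s : ℕ} {c : ℤ} {F : ℤ → ℤ} (hF : ∀ k, F (k + s) = F k + c) (k q : ℤ) :
    F (k + s * q) = F k + c * q := by
  induction q using Int.induction_on with
  | zero => simp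
  | succ n ih =>
    rw [show k + s * ((n : ℤ) + 1) = k + s * n + s by ring, hF, ih]
    ring
  | pred n ih =>
    have := hF (k + s * (-(n : ℤ) - 1))
    rw [show k + s * (-(n : ℤ) - 1) + s = k + s * (-n) by ring, ih] at this
    linarith

lemma dvd_sub_of_dvd_apply {s : ℕ} {w : Equiv.Perm ℤ} (hw : ∀ k, w (k + s) = w k + s) {j k : ℤ}
    (h : (s : ℤ) ∣ w j - w k) : (s : ℤ) ∣ j - k := by
  obtain ⟨q, hq⟩ := h
  have h1 : w j = w (k + s * q) := by
    rw [quasiperiodic_mul hw]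
    omega
  rw [w.injective h1]
  exact ⟨q, by ring⟩

lemma sum_range_comp_perm {s : ℕ} (hs : 0 < s) {P : ℤ → ℤ} (hP : ∀ m, P (m + s) = P m)
    {σ : Equiv.Perm ℤ} (hσ : ∀ m, σ (m + s) = σ m + s) :
    ∑ i ∈ Finset.range s, P (σ i) = ∑ i ∈ Finset.range s, P i := by
  have hs' : (0 : ℤ) < s := by exact_mod_cast hs
  have hP' : ∀ m, P (m % s) = P m := by
    intro m
    have := quasiperiodic_mul (F := P) (c := 0) (by simpa using hP) (m % s) (m / s)
    rw [Int.emod_add_mul_ediv] at this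
    rw [this]
    ring
  have hcast : ∀ m : ℤ, (((m % s).toNat : ℕ) : ℤ) = m % s :=
    fun m => Int.toNat_of_nonneg (Int.emod_nonneg _ hs'.ne')
  have hmaps : ∀ i ∈ Finset.range s, (σ i % s).toNat ∈ Finset.range s := by
    intro i _
    have := Int.emod_lt_of_pos (σ i) hs'
    have := hcast (σ i)
    rw [Finset.mem_range]
    omega
  have hinj : Set.InjOn (fun i : ℕ => (σ i % s).toNat) (Finset.range s) := by
    intro i hi j hj hij
    simp only [Finset.coe_range, Set.mem_Iio] at hi hj
    have h1 : σ i % s = σ j % s := by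
      rw [← hcast (σ i), ← hcast (σ j)]
      exact congrArg (fun n : ℕ => (n : ℤ)) hij
    have h2 := dvd_sub_of_dvd_apply hσ
      (Int.dvd_of_emod_eq_zero (Int.emod_eq_emod_iff_emod_sub_eq_zero.mp h1))
    have h3 := Int.emod_eq_emod_iff_emod_sub_eq_zero.mpr (Int.emod_eq_zero_of_dvd h2)
    rw [Int.emod_eq_of_lt (by omega) (by omega), Int.emod_eq_of_lt (by omega) (by omega)] at h3
    exact_mod_cast h3
  refine Finset.sum_nbij (fun i : ℕ => (σ i % s).toNat) hmaps hinj
    (Finset.surjOn_of_injOn_of_card_le _ hmaps hinj le_rfl) ?_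
  intro i _
  rw [hcast, hP']

lemma sum_range_intCast (s : ℕ) : ∑ i ∈ Finset.range s, (i : ℤ) = s.choose 2 := by
  rw [Nat.choose_two_right, ← Finset.sum_range_id]
  push_cast
  rfl

lemma genPerm_add {s : ℕ} (hs : 2 ≤ s) (a m : ℤ) :
    genPerm s hs a (m + s) = genPerm s hs a m + s := by
  have h1 : ∀ b : ℤ, (s : ℤ) ∣ m + s - b ↔ (s : ℤ) ∣ m - b := by
    intro b
    rw [show m + s - b = (m - b) + s by ring]
    exact dvd_add_self_right
  have h2 : (s : ℤ) ∣ m + s - a - 1 ↔ (s : ℤ) ∣ m - a - 1 := by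
    have := h1 (a + 1)
    rwa [← sub_sub, ← sub_sub] at this
  change genFun s a (m + s) = genFun s a m + s
  unfold genFun
  simp only [h1, h2]
  split_ifs <;> ring

lemma not_dvd_one {s : ℕ} (hs : 2 ≤ s) : ¬ (s : ℤ) ∣ 1 := by
  intro h
  have := Int.le_of_dvd one_pos h
  omega

lemma genPerm_self {s : ℕ} (hs : 2 ≤ s) (a : ℤ) : genPerm s hs a a = a + 1 := by
  change genFun s a a = a + 1
  simp [genFun]

lemma genPerm_succ {s : ℕ} (hs : 2 ≤ s) (a : ℤ) : genPerm s hs a (a + 1) = a := by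
  change genFun s a (a + 1) = a
  have := not_dvd_one hs
  simp [genFun, this]

lemma genPerm_of_not_dvd {s : ℕ} (hs : 2 ≤ s) {a k : ℤ} (h1 : ¬ (s : ℤ) ∣ k - a)
    (h2 : ¬ (s : ℤ) ∣ k - a - 1) : genPerm s hs a k = k := by
  change genFun s a k = k
  simp [genFun, h1, h2]

lemma genPerm_mul_self {s : ℕ} (hs : 2 ≤ s) (a : ℤ) : genPerm s hs a * genPerm s hs a = 1 := by
  ext m
  exact genFun_involutive s hs a m

lemma mul_mem_affSymSet {s : ℕ} (hs : 0 < s) {w v : Equiv.Perm ℤ} (hw : w ∈ AffSymSet s)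
    (hv : v ∈ AffSymSet s) : w * v ∈ AffSymSet s := by
  refine ⟨fun m => by simp [hv.1, hw.1], ?_⟩
  have h1 := sum_range_comp_perm hs (P := fun m => w m - m)
    (fun m => by simp only [hw.1]; ring) hv.1
  have h2 := hv.2
  have h3 := hw.2
  simp only [Finset.sum_sub_distrib, sum_range_intCast] at h1
  simp only [Equiv.Perm.mul_apply]
  linarith

lemma sum_range_shift {s : ℕ} (hs : 0 < s) {P : ℤ → ℤ} (hP : ∀ m, P (m + s) = P m) (a : ℤ) :
    ∑ i ∈ Finset.range s, P (i + a) = ∑ i ∈ Finset.range s, P i := by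
  have := sum_range_comp_perm hs hP (σ := Equiv.addRight a) (fun m => by simp; ring)
  simpa using this

lemma genPerm_mem_affSymSet {s : ℕ} (hs : 2 ≤ s) (a : ℤ) : genPerm s hs a ∈ AffSymSet s := by
  refine ⟨genPerm_add hs a, ?_⟩
  have h1 := sum_range_shift (s := s) (by omega) (P := fun m => genPerm s hs a m - m)
    (fun m => by simp only [genPerm_add]; ring) a
  have h2 : ∑ i ∈ Finset.range s, (genPerm s hs a (i + a) - (i + a)) = 0 := by
    obtain ⟨r, rfl⟩ := Nat.exists_eq_add_of_le' hs
    rw [Finset.sum_range_succ', Finset.sum_range_succ', Finset.sum_eq_zero]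
    · simp [genPerm_self, add_comm 1 a, genPerm_succ]
    · intro i hi
      rw [Finset.mem_range] at hi
      rw [genPerm_of_not_dvd, sub_self]
      · intro h
        have := Int.le_of_dvd (by push_cast; omega) h
        push_cast at this
        omega
      · intro h
        have := Int.le_of_dvd (by push_cast; omega) h
        push_cast at this
        omega
  simp only [h2, Finset.sum_sub_distrib, sum_range_intCast] at h1
  linarith

lemma one_mem_affSymSet (s : ℕ) : (1 : Equiv.Perm ℤ) ∈ AffSymSet s :=
  ⟨fun _ => rfl, sum_range_intCast s⟩

lemma eq_one_of_forall_lt {s : ℕ} (hs : 0 < s) {w : Equiv.Perm ℤ} (hw : w ∈ AffSymSet s)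
    (h : ∀ a, w a < w (a + 1)) : w = 1 := by
  have hmono : StrictMono w := strictMono_int_of_lt_succ h
  have hstep : ∀ k, w (k + 1) = w k + 1 := by
    intro k
    obtain ⟨j, hj⟩ := w.surjective (w k + 1)
    have h1 : k < j := hmono.lt_iff_lt.mp (by omega)
    have h2 : w (k + 1) ≤ w j := hmono.monotone (by omega)
    have := h k
    omega
  have hlin : ∀ k, w k = w 0 + k := by
    intro k
    have := quasiperiodic_mul (s := 1) (c := 1) (F := w) (by simpa using hstep) 0 k
    simpa using this
  have h0 := hw.2
  rw [Finset.sum_congr rfl (fun i _ => hlin (i : ℕ)), Finset.sum_add_distrib, sum_range_intCast] at h0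
  have : w 0 = 0 := by
    have h1 : (s : ℤ) * w 0 = 0 := by simpa using h0
    rcases mul_eq_zero.mp h1 with h2 | h2
    · omega
    · exact h2
  ext k
  rw [hlin, this]
  simp

/-- Composing with a generator at a descent decreases the total squared displacement. -/
lemma sum_sq_mul_genPerm_lt {s : ℕ} (hs : 2 ≤ s) {w : Equiv.Perm ℤ} (hw : w ∈ AffSymSet s)
    {a : ℤ} (ha : w (a + 1) < w a) :
    ∑ i ∈ Finset.range s, ((w * genPerm s hs a) i - i) ^ 2 <
      ∑ i ∈ Finset.range s, (w i - i) ^ 2 := by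
  have hs0 : 0 < s := by omega
  rw [← sum_range_comp_perm hs0 (P := fun m => (w m - m) ^ 2)
    (fun m => by simp only [hw.1]; ring) (genPerm_add hs a), ← sub_pos, ← Finset.sum_sub_distrib]
  have h1 := sum_range_shift hs0 (P := fun m => (w (genPerm s hs a m) - genPerm s hs a m) ^ 2 -
    ((w * genPerm s hs a) m - m) ^ 2)
    (fun m => by simp only [Equiv.Perm.mul_apply, genPerm_add, hw.1]; ring) a
  rw [← h1]
  obtain ⟨r, rfl⟩ := Nat.exists_eq_add_of_le' hs
  rw [Finset.sum_range_succ', Finset.sum_range_succ', Finset.sum_eq_zero]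
  · simp only [Equiv.Perm.mul_apply]
    have e1 : ((0 + 1 : ℕ) : ℤ) + a = a + 1 := by push_cast; ring
    have e2 : ((0 : ℕ) : ℤ) + a = a := by simp
    rw [e1, e2, genPerm_self, genPerm_succ]
    nlinarith
  · intro i hi
    rw [Finset.mem_range] at hi
    rw [Equiv.Perm.mul_apply, genPerm_of_not_dvd, sub_self]
    · intro h
      have := Int.le_of_dvd (by push_cast; omega) h
      push_cast at this
      omega
    · intro h
      have := Int.le_of_dvd (by push_cast; omega) h
      push_cast at this
      omega

lemma dvd_mul_sub_iff {s t : ℕ} (hst : Nat.Coprime s t) {m k a : ℤ}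
    (h : (s : ℤ) ∣ m - (k * t - lc s t)) :
    (s : ℤ) ∣ m - (a * t - lc s t) ↔ (s : ℤ) ∣ k - a := by
  have h1 : IsCoprime (s : ℤ) t := Nat.isCoprime_iff_coprime.mpr hst
  rw [show m - (a * t - lc s t) = (m - (k * t - lc s t)) + (k - a) * t by ring,
    dvd_add_right h]
  exact ⟨h1.dvd_of_dvd_mul_right, fun h => h.mul_right _⟩

lemma levelGenFun_apply {s t : ℕ} (hs : 2 ≤ s) (hst : Nat.Coprime s t) {a m k : ℤ}
    (h : (s : ℤ) ∣ m - (k * t - lc s t)) :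
    levelGenFun s t (a + 1) m = m + t * (genPerm s hs a k - k) := by
  change _ = m + t * (genFun s a k - k)
  unfold levelGenFun genFun
  simp only [dvd_mul_sub_iff hst h, show a + 1 - 1 = a by ring, ← sub_sub]
  split_ifs <;> ring

/-- Explicit formula for the level `t` action on `ℤ`. -/
lemma levelTAction_apply {s t : ℕ} (hs : 2 ≤ s) (hst : Nat.Coprime s t)
    {Φ : Equiv.Perm ℤ → Equiv.Perm ℤ} (hΦ : IsLevelTAction s t hs Φ)
    {w : Equiv.Perm ℤ} (hw : w ∈ AffSymSet s) {m k : ℤ}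
    (h : (s : ℤ) ∣ m - (k * t - lc s t)) : Φ w m = m + t * (w k - k) := by
  obtain ⟨n, hn⟩ : ∃ n : ℕ, ∑ i ∈ Finset.range s, (w i - i) ^ 2 < (n : ℤ) :=
    ⟨(∑ i ∈ Finset.range s, (w i - i) ^ 2).toNat + 1, by push_cast; omega⟩
  induction n generalizing w m k with
  | zero =>
    exact absurd hn (not_lt.mpr (by push_cast; exact Finset.sum_nonneg fun i _ => sq_nonneg _))
  | succ n ih =>
    by_cases hdesc : ∃ a, w (a + 1) < w a
    · obtain ⟨a, ha⟩ := hdesc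
      have hg := genPerm_mem_affSymSet hs a
      have hwg := mul_mem_affSymSet (by omega) hw hg
      have hlt := sum_sq_mul_genPerm_lt hs hw ha
      have hgen : Φ (genPerm s hs a) m = m + t * (genPerm s hs a k - k) := by
        have h1 := hΦ.2 (a + 1) m
        rw [levelGenFun_apply hs hst h] at h1
        simpa using h1
      have hdvd : (s : ℤ) ∣ (m + t * (genPerm s hs a k - k)) -
          (genPerm s hs a k * t - lc s t) := by
        convert h using 1
        ring
      have hww : w = w * genPerm s hs a * genPerm s hs a := by
        rw [mul_assoc, genPerm_mul_self, mul_one]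
      have h2 := ih hwg hdvd (by push_cast at hn; linarith)
      have h3 : w k = (w * genPerm s hs a) (genPerm s hs a k) := by
        rw [← Equiv.Perm.mul_apply, ← hww]
      rw [hww, hΦ.1 _ _ hwg hg, Equiv.Perm.mul_apply, hgen, h2, ← hww, h3]
      ring
    · have h1 : w = 1 := by
        refine eq_one_of_forall_lt (by omega) hw fun a => ?_
        refine lt_of_le_of_ne (not_lt.mp fun h => hdesc ⟨a, h⟩) fun h => ?_
        have := w.injective h
        omega
      have h2 := hΦ.1 1 1 (one_mem_affSymSet s) (one_mem_affSymSet s)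
      rw [mul_one, left_eq_mul] at h2
      rw [h1, h2]
      simp

/-- The integer functions `y` with `y (k + s) = y k + t` and `y (-1 - k) = -t - y k`. -/
def SymmFun (s t : ℕ) : Set (ℤ → ℤ) :=
  {y | (∀ k, y (k + s) = y k + t) ∧ ∀ k, y (-1 - k) = -t - y k}

/-- The affine hyperoctahedral group `H̃_s`; the condition on the sum of a window is automatic. -/
def SymmPerm (s : ℕ) : Set (Equiv.Perm ℤ) :=
  {w | (∀ m : ℤ, w (m + s) = w m + s) ∧ ∀ m : ℤ, w (-1 - m) = -1 - w m}

/-- The set of integers `k t - c - s q` with `q > y k`. -/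
def coreBeta (s t : ℕ) (y : ℤ → ℤ) : Set ℤ :=
  {b | ∃ k q : ℤ, b = k * t - lc s t - s * q ∧ y k < q}

lemma mem_symmPerm_iff {s : ℕ} (w : Equiv.Perm ℤ) :
    (w ∈ AffSymSet s ∧ ∀ m : ℤ, w (-1 - m) = -1 - w m) ↔ w ∈ SymmPerm s := by
  constructor
  · exact fun h => ⟨h.1.1, h.2⟩
  · intro h
    refine ⟨⟨h.1, ?_⟩, h.2⟩
    have h1 := Finset.sum_range_reflect (fun i => w (i : ℤ)) s
    have h2 : ∀ i ∈ Finset.range s, w ((s - 1 - i : ℕ) : ℤ) = (s - 1) - w i := by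
      intro i hi
      rw [Finset.mem_range] at hi
      rw [show ((s - 1 - i : ℕ) : ℤ) = -1 - i + s by omega, h.1, h.2]
      ring
    rw [Finset.sum_congr rfl h2, Finset.sum_sub_distrib] at h1
    have h3 := Finset.sum_range_id_mul_two s
    have h5 : (s.choose 2 : ℤ) * 2 = s * (s - 1) := by
      rw [Finset.sum_range_id, ← Nat.choose_two_right] at h3
      rcases Nat.eq_zero_or_pos s with rfl | hs
      · simp
      · have : ((s - 1 : ℕ) : ℤ) = s - 1 := by omega
        rw [← this]
        exact_mod_cast h3
    simp only [Finset.sum_const, Finset.card_range, nsmul_eq_mul] at h1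
    linarith

lemma two_mul_lc {s t : ℕ} (hst : Nat.Coprime s t) :
    2 * lc s t = ((s : ℤ) - 1) * (t - 1) := by
  unfold lc
  apply Int.mul_ediv_cancel'
  rcases Nat.even_or_odd s with hs | hs
  · have ht : Odd t := by
      rw [← Nat.not_even_iff_odd]
      intro ht
      have := Nat.dvd_gcd hs.two_dvd ht.two_dvd
      rw [hst] at this
      omega
    obtain ⟨r, rfl⟩ := ht
    exact ⟨(s - 1) * r, by push_cast; ring⟩
  · obtain ⟨r, rfl⟩ := hs
    exact ⟨r * (t - 1), by push_cast; ring⟩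

lemma exists_coord {s t : ℕ} (hst : Nat.Coprime s t) (b : ℤ) :
    ∃ k q : ℤ, b = k * t - lc s t - s * q := by
  obtain ⟨x, z, h⟩ := Nat.isCoprime_iff_coprime.mpr hst
  refine ⟨z * (b + lc s t), -(x * (b + lc s t)), ?_⟩
  linear_combination (-(b + lc s t)) * h

lemma coord_unique {s t : ℕ} (hs : 0 < s) (hst : Nat.Coprime s t) {k q k' q' : ℤ}
    (h : k * t - lc s t - s * q = k' * t - lc s t - s * q') :
    ∃ r, k' = k + s * r ∧ q' = q + t * r := by
  have h1 : (s : ℤ) ∣ (k' - k) * t := ⟨q' - q, by linarith⟩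
  obtain ⟨r, hr⟩ := (Nat.isCoprime_iff_coprime.mpr hst).dvd_of_dvd_mul_right h1
  refine ⟨r, by linarith, ?_⟩
  have hs' : (s : ℤ) ≠ 0 := by omega
  apply mul_left_cancel₀ hs'
  linear_combination h + t * hr

lemma mem_coreBeta_iff {s t : ℕ} (hs : 0 < s) (hst : Nat.Coprime s t) {y : ℤ → ℤ}
    (hy : ∀ k, y (k + s) = y k + t) (k q : ℤ) :
    k * t - lc s t - s * q ∈ coreBeta s t y ↔ y k < q := by
  constructor
  · rintro ⟨k', q', h, hlt⟩
    obtain ⟨r, rfl, rfl⟩ := coord_unique hs hst h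
    rw [quasiperiodic_mul hy] at hlt
    linarith
  · exact fun h => ⟨k, q, rfl, h⟩

lemma coreBeta_injective {s t : ℕ} (hs : 0 < s) (hst : Nat.Coprime s t) {y z : ℤ → ℤ}
    (hy : ∀ k, y (k + s) = y k + t) (hz : ∀ k, z (k + s) = z k + t)
    (h : coreBeta s t y = coreBeta s t z) : y = z := by
  have key : ∀ k q, y k < q ↔ z k < q := by
    intro k q
    rw [← mem_coreBeta_iff hs hst hy, ← mem_coreBeta_iff hs hst hz, h]
  funext k
  have h1 := key k (y k + 1)
  have h2 := key k (z k + 1)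
  omega

lemma symm_coord {s t : ℕ} (hst : Nat.Coprime s t) (k q : ℤ) :
    -1 - (k * t - lc s t - s * q) = (-1 - k) * t - lc s t - s * (1 - t - q) := by
  linear_combination two_mul_lc hst

lemma exists_symmFun_of_core {s t : ℕ} (hs : 0 < s) (ht : 0 < t) (hst : Nat.Coprime s t)
    {p : Partn} (hp : SelfConj p) (hps : IsCore s p) (hpt : IsCore t p) :
    ∃ y ∈ SymmFun s t, Monotone y ∧ betaSet p = coreBeta s t y := by
  rw [selfConj_iff] at hp
  rw [isCore_iff s hs] at hps
  rw [isCore_iff t ht] at hpt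
  have hs1 : (1 : ℤ) ≤ s := by omega
  have hexists : ∀ k : ℤ, ∃ y : ℤ, ∀ q, k * t - lc s t - s * q ∈ betaSet p ↔ y < q := by
    intro k
    obtain ⟨N, hN⟩ := p.eventually_zero
    have hneg : ∀ b : ℤ, b < -N → b ∈ betaSet p := by
      intro b hb
      refine ⟨(-1 - b).toNat, ?_⟩
      rw [hN _ (by omega)]
      omega
    have hup : ∀ b ∈ betaSet p, b ≤ p.f 0 := by
      rintro b ⟨i, rfl⟩
      have := p.antitone (Nat.zero_le i)
      omega
    obtain ⟨l, hl, hmin⟩ := Int.exists_least_of_bdd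
      (P := fun q => k * t - lc s t - s * q ∈ betaSet p)
      ⟨-|k * t - lc s t - p.f 0|, fun q hq => by
        have h1 := hup _ hq
        have h2 := neg_abs_le (k * t - lc s t - p.f 0)
        have h3 := abs_nonneg (k * t - lc s t - p.f 0)
        by_contra hlt
        nlinarith⟩
      ⟨|k * t - lc s t| + N + 1, hneg _ (by
        have h2 := le_abs_self (k * t - lc s t)
        have h3 := abs_nonneg (k * t - lc s t)
        nlinarith)⟩
    refine ⟨l - 1, fun q => ⟨fun h => ?_, fun h => ?_⟩⟩
    · have := hmin q h
      omega
    · induction q, (show l ≤ q by omega) using Int.leInduction with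
      | base => exact hl
      | succ q hq ih =>
        have := hps _ (ih (by omega))
        rwa [show k * t - lc s t - s * q - s = k * t - lc s t - s * (q + 1) by ring] at this
  choose y hy using hexists
  have hper : ∀ k, y (k + s) = y k + t := by
    intro k
    have h1 : ∀ q, y (k + s) < q ↔ y k + t < q := by
      intro q
      rw [← hy, show (k + s) * t - lc s t - s * q = k * t - lc s t - s * (q - t) by ring, hy]
      omega
    have h2 := h1 (y (k + s) + 1)
    have h3 := h1 (y k + t + 1)
    omega
  have hsymm : ∀ k, y (-1 - k) = -t - y k := by
    intro k
    have h1 : ∀ q, y k < q ↔ ¬ y (-1 - k) < 1 - t - q := by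
      intro q
      rw [← hy, ← hy, hp, symm_coord hst]
    have h2 := h1 (y k + 1)
    have h3 := h1 (1 - t - y (-1 - k))
    omega
  refine ⟨y, ⟨hper, hsymm⟩, monotone_int_of_le_succ fun k => ?_, ?_⟩
  · have h1 := hpt _ ((hy (k + 1) (y (k + 1) + 1)).mpr (by omega))
    rw [show (k + 1) * t - lc s t - s * (y (k + 1) + 1) - t =
      k * t - lc s t - s * (y (k + 1) + 1) by ring, hy] at h1
    omega
  · ext b
    obtain ⟨k, q, rfl⟩ := exists_coord hst b
    rw [hy, mem_coreBeta_iff hs hst hper]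

lemma exists_core_of_symmFun {s t : ℕ} (hs : 0 < s) (ht : 0 < t) (hst : Nat.Coprime s t)
    {y : ℤ → ℤ} (hy : y ∈ SymmFun s t) (hmono : Monotone y) :
    ∃ p, (SelfConj p ∧ IsCore s p ∧ IsCore t p) ∧ betaSet p = coreBeta s t y := by
  have hmem := mem_coreBeta_iff hs hst hy.1
  have hsymm : ∀ b, b ∈ coreBeta s t y ↔ -1 - b ∉ coreBeta s t y := by
    intro b
    obtain ⟨k, q, rfl⟩ := exists_coord hst b
    rw [symm_coord hst, hmem, hmem, hy.2]
    omega
  have hs1 : (1 : ℤ) ≤ s := by omega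
  have hlow : ∀ b : ℤ, b < -((|lc s t| + s * (|y 0| + t)).toNat : ℤ) → b ∈ coreBeta s t y := by
    intro b hb
    obtain ⟨k, q, rfl⟩ := exists_coord hst b
    have hk := Int.emod_add_mul_ediv k s
    have hk0 := Int.emod_nonneg k (b := (s : ℤ)) (by omega)
    have hk1 := Int.emod_lt_of_pos k (b := (s : ℤ)) (by omega)
    generalize k % s = k₀ at hk hk0 hk1
    generalize k / s = r at hk
    subst hk
    rw [hmem, quasiperiodic_mul hy.1]
    have h1 : y k₀ ≤ y (0 + s) := hmono (by omega)
    rw [hy.1] at h1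
    have h2 := le_abs_self (y 0)
    have h3 := neg_abs_le (lc s t)
    have h4 := le_abs_self (lc s t)
    have h5 : |lc s t| + s * (|y 0| + t) ≤ ((|lc s t| + s * (|y 0| + t)).toNat : ℤ) :=
      Int.self_le_toNat _
    have h6 : 0 ≤ k₀ * t := by positivity
    have h7 : (s : ℤ) * (|y 0| + t) < s * (q - t * r) := by
      nlinarith
    have h8 := lt_of_mul_lt_mul_left h7 (by omega)
    linarith
  obtain ⟨p, hp⟩ := exists_betaSet_eq _ hsymm _ hlow
  refine ⟨p, ⟨?_, ?_, ?_⟩, hp⟩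
  · rwa [selfConj_iff, hp]
  · rw [isCore_iff s hs, hp]
    intro b hb
    obtain ⟨k, q, rfl⟩ := exists_coord hst b
    rw [show k * t - lc s t - s * q - s = k * t - lc s t - s * (q + 1) by ring, hmem]
    rw [hmem] at hb
    omega
  · rw [isCore_iff t ht, hp]
    intro b hb
    obtain ⟨k, q, rfl⟩ := exists_coord hst b
    rw [show k * t - lc s t - s * q - t = (k - 1) * t - lc s t - s * q by ring, hmem]
    rw [hmem] at hb
    have := hmono (show k - 1 ≤ k by omega)
    omega

lemma sSet_eq_range {s t : ℕ} (hs : 0 < s) (hst : Nat.Coprime s t) {y : ℤ → ℤ}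
    (hy : ∀ k, y (k + s) = y k + t) {p : Partn} (hp : betaSet p = coreBeta s t y) :
    sSet s p = Set.range fun k : ℤ => k * t - lc s t - s * y k := by
  have hmem := mem_coreBeta_iff hs hst hy
  ext x
  obtain ⟨k, q, rfl⟩ := exists_coord hst x
  simp only [sSet, hp, Set.mem_ofPred_eq, Set.mem_range]
  rw [show k * t - lc s t - s * q - s = k * t - lc s t - s * (q + 1) by ring, hmem, hmem]
  constructor
  · rintro ⟨h1, h2⟩
    exact ⟨k, by rw [show y k = q by omega]⟩
  · rintro ⟨k', h⟩
    obtain ⟨r, rfl, hq⟩ := coord_unique hs hst h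
    rw [hq, quasiperiodic_mul hy]
    constructor <;> linarith

lemma image_sSet_eq_iff {s t : ℕ} (hs : 2 ≤ s) (hst : Nat.Coprime s t)
    {Φ : Equiv.Perm ℤ → Equiv.Perm ℤ} (hΦ : IsLevelTAction s t hs Φ) {y : ℤ → ℤ}
    (hy : ∀ k, y (k + s) = y k + t) {p : Partn} (hp : betaSet p = coreBeta s t y)
    {w : Equiv.Perm ℤ} (hw : w ∈ AffSymSet s) :
    ⇑(Φ w) '' sSet s p = sSet s p ↔ ∀ k, y (w k) = y k := by
  have hs0 : 0 < s := by omega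
  have happ : ∀ k, Φ w (k * t - lc s t - s * y k) = w k * t - lc s t - s * y k := by
    intro k
    rw [levelTAction_apply hs hst hΦ hw (k := k) ⟨-y k, by ring⟩]
    ring
  rw [sSet_eq_range hs0 hst hy hp, ← Set.range_comp]
  constructor
  · intro h k
    have h1 : Φ w (k * t - lc s t - s * y k) ∈
        Set.range fun k : ℤ => k * t - lc s t - s * y k := by
      rw [← h]
      exact ⟨k, rfl⟩
    rw [happ] at h1
    obtain ⟨k', hk'⟩ := h1
    obtain ⟨r, h2, h3⟩ := coord_unique hs0 hst hk'
    rw [h2, h3, quasiperiodic_mul hy]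
  · intro h
    have h1 : (⇑(Φ w) ∘ fun k : ℤ => k * t - lc s t - s * y k) =
        (fun k : ℤ => k * t - lc s t - s * y k) ∘ w := by
      funext k
      simp only [Function.comp_apply, happ, h]
    rw [h1]
    exact w.surjective.range_comp _

/-- The residue modulo `s` of an integer, as an element of `Fin s`. -/
def residue (s : ℕ) [NeZero s] (k : ℤ) : Fin s :=
  ⟨(k % s).toNat, by
    have := Nat.pos_of_neZero s
    have := Int.emod_lt_of_pos k (b := (s : ℤ)) (by omega)
    have := Int.emod_nonneg k (b := (s : ℤ)) (by omega)
    omega⟩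

lemma residue_val {s : ℕ} [NeZero s] (k : ℤ) : ((residue s k : ℕ) : ℤ) = k % s :=
  Int.toNat_of_nonneg (Int.emod_nonneg k (by have := Nat.pos_of_neZero s; omega))

lemma residue_add_mul_ediv {s : ℕ} [NeZero s] (k : ℤ) :
    ((residue s k : ℕ) : ℤ) + s * (k / s) = k := by
  rw [residue_val, Int.emod_add_mul_ediv]

lemma residue_eq_iff {s : ℕ} [NeZero s] (j k : ℤ) :
    residue s j = residue s k ↔ (s : ℤ) ∣ j - k := by
  rw [Fin.ext_iff, ← Int.natCast_inj, residue_val, residue_val,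
    Int.emod_eq_emod_iff_emod_sub_eq_zero, Int.dvd_iff_emod_eq_zero]

lemma residue_natCast {s : ℕ} [NeZero s] (i : Fin s) : residue s ((i : ℕ) : ℤ) = i := by
  rw [Fin.ext_iff, ← Int.natCast_inj, residue_val]
  exact Int.emod_eq_of_lt (by omega) (by omega)

lemma residue_eq_self_iff {s : ℕ} [NeZero s] (k : ℤ) (i : Fin s) :
    residue s k = i ↔ (s : ℤ) ∣ k - (i : ℕ) := by
  rw [← residue_eq_iff, residue_natCast]

lemma rev_val {s : ℕ} (i : Fin s) : ((i.rev : ℕ) : ℤ) = -1 - (i : ℕ) + s := by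
  rw [Fin.val_rev]
  omega

lemma residue_neg {s : ℕ} [NeZero s] (k : ℤ) : residue s (-1 - k) = (residue s k).rev := by
  rw [residue_eq_self_iff, rev_val]
  have := residue_add_mul_ediv (s := s) k
  exact ⟨-(k / s) - 1, by linear_combination this⟩

lemma eq_of_eq_on_fin {s : ℕ} [NeZero s] {c : ℤ} {F G : ℤ → ℤ} (hF : ∀ k, F (k + s) = F k + c)
    (hG : ∀ k, G (k + s) = G k + c) (h : ∀ i : Fin s, F (i : ℕ) = G (i : ℕ)) : F = G := by
  funext k
  rw [← residue_add_mul_ediv (s := s) k, quasiperiodic_mul hF, quasiperiodic_mul hG, h]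

/-- The quasiperiodic extension of a function on `Fin s`. -/
def quasiExtend (s : ℕ) [NeZero s] (c : ℤ) (η : Fin s → ℤ) (k : ℤ) : ℤ :=
  η (residue s k) + c * (k / s)

lemma quasiExtend_add {s : ℕ} [NeZero s] (c : ℤ) (η : Fin s → ℤ) (k : ℤ) :
    quasiExtend s c η (k + s) = quasiExtend s c η k + c := by
  have hs : (s : ℤ) ≠ 0 := by exact_mod_cast NeZero.ne s
  have h1 : residue s (k + s) = residue s k := by
    rw [residue_eq_iff]
    simp
  rw [quasiExtend, quasiExtend, h1, Int.add_ediv_of_dvd_right dvd_rfl, Int.ediv_self hs]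
  ring

lemma quasiExtend_natCast {s : ℕ} [NeZero s] (c : ℤ) (η : Fin s → ℤ) (i : Fin s) :
    quasiExtend s c η (i : ℕ) = η i := by
  rw [quasiExtend, residue_natCast, Int.ediv_eq_zero_of_lt (by omega) (by omega)]
  ring

lemma quasiExtend_neg {s : ℕ} [NeZero s] {c d : ℤ} {η : Fin s → ℤ}
    (hη : ∀ i, η i.rev = d - η i) (k : ℤ) :
    quasiExtend s c η (-1 - k) = d - c - quasiExtend s c η k := by
  have hs : (s : ℤ) ≠ 0 := by exact_mod_cast NeZero.ne s
  have h1 : (-1 - k) / (s : ℤ) = -1 - k / s := by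
    apply mul_left_cancel₀ hs
    have e1 := residue_add_mul_ediv (s := s) k
    have e2 := residue_add_mul_ediv (s := s) (-1 - k)
    rw [residue_neg, rev_val] at e2
    linear_combination e2 + e1
  rw [quasiExtend, quasiExtend, residue_neg, hη, h1]
  ring

lemma symmFun_rev {s t : ℕ} {y : ℤ → ℤ} (hy : y ∈ SymmFun s t) (i : Fin s) :
    y (i.rev : ℕ) = -y (i : ℕ) := by
  rw [rev_val, hy.1, hy.2]
  ring

lemma symmPerm_rev {s : ℕ} {w : Equiv.Perm ℤ} (hw : w ∈ SymmPerm s) (i : Fin s) :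
    w (i.rev : ℕ) = -1 - w (i : ℕ) + s := by
  rw [rev_val, hw.1, hw.2]

lemma quasiExtend_symmFun {s t : ℕ} [NeZero s] {η : Fin s → ℤ} (hη : ∀ i, η i.rev = -η i) :
    quasiExtend s t η ∈ SymmFun s t := by
  refine ⟨quasiExtend_add _ _, fun k => ?_⟩
  rw [quasiExtend_neg (d := 0) (fun i => by rw [hη]; ring)]
  ring

lemma apply_residue_cast {s t : ℕ} [NeZero s] {y : ℤ → ℤ} (hy : ∀ k, y (k + s) = y k + t)
    (k : ℤ) : ((y (residue s k : ℕ) : ℤ) : ZMod t) = (y k : ZMod t) := by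
  conv_rhs => rw [← residue_add_mul_ediv (s := s) k, quasiperiodic_mul hy]
  simp

/-- The permutation of residues induced by a periodic permutation. -/
noncomputable def residuePerm {s : ℕ} [NeZero s] (w : Equiv.Perm ℤ)
    (hw : ∀ m, w (m + s) = w m + s) : Equiv.Perm (Fin s) :=
  Equiv.ofBijective (fun i => residue s (w (i : ℕ))) <| by
    rw [← Finite.injective_iff_bijective]
    intro i j hij
    have h1 := dvd_sub_of_dvd_apply hw ((residue_eq_iff _ _).mp hij)
    rwa [← residue_eq_self_iff, residue_natCast] at h1

lemma residuePerm_apply {s : ℕ} [NeZero s] (w : Equiv.Perm ℤ)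
    (hw : ∀ m, w (m + s) = w m + s) (i : Fin s) :
    residuePerm w hw i = residue s (w (i : ℕ)) := rfl

lemma residuePerm_rev {s : ℕ} [NeZero s] {w : Equiv.Perm ℤ} (hw : w ∈ SymmPerm s) (i : Fin s) :
    residuePerm w hw.1 i.rev = (residuePerm w hw.1 i).rev := by
  rw [residuePerm_apply, residuePerm_apply, symmPerm_rev hw, ← residue_neg, residue_eq_iff]
  simp

/-- A symmetric permutation of `Fin s` matching two functions modulo `t` lifts to an affine one
matching them exactly. -/
lemma exists_symmPerm_lift {s t : ℕ} [NeZero s] (ht : 0 < t) {y z : ℤ → ℤ}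
    (hy : y ∈ SymmFun s t) (hz : z ∈ SymmFun s t) {σ : Equiv.Perm (Fin s)}
    (hσ : ∀ i, σ i.rev = (σ i).rev)
    (h : ∀ i, ((y (σ i : ℕ) : ℤ) : ZMod t) = ((z (i : ℕ) : ℤ) : ZMod t)) :
    ∃ w ∈ SymmPerm s, (∀ i : Fin s, residue s (w (i : ℕ)) = σ i) ∧ ∀ k, y (w k) = z k := by
  have hs : (s : ℤ) ≠ 0 := by exact_mod_cast NeZero.ne s
  have ht' : (t : ℤ) ≠ 0 := by omega
  have h1 : ∀ i : Fin s, ∃ n : ℤ, z (i : ℕ) - y (σ i : ℕ) = t * n := fun i =>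
    (ZMod.intCast_eq_intCast_iff_dvd_sub _ _ _).mp (h i)
  choose n hn using h1
  have hnrev : ∀ i, n i.rev = -n i := by
    intro i
    apply mul_left_cancel₀ ht'
    rw [← hn, hσ, symmFun_rev hz, symmFun_rev hy]
    linarith [hn i]
  set F : ℤ → ℤ := quasiExtend s s fun i => (σ i : ℕ) + s * n i with hF
  have hadd : ∀ k, F (k + s) = F k + s := quasiExtend_add _ _
  have hval : ∀ i : Fin s, F (i : ℕ) = (σ i : ℕ) + s * n i := quasiExtend_natCast _ _
  have hneg : ∀ k, F (-1 - k) = -1 - F k := by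
    intro k
    rw [hF, quasiExtend_neg (d := s - 1)]
    · ring
    · intro i
      rw [hσ, rev_val, hnrev]
      ring
  have hres : ∀ k, residue s (F k) = σ (residue s k) := by
    intro k
    rw [residue_eq_self_iff, hF, quasiExtend]
    exact ⟨n (residue s k) + k / s, by ring⟩
  have hbij : Function.Bijective F := by
    constructor
    · intro j k hjk
      have h2 : residue s j = residue s k := σ.injective (by rw [← hres, ← hres, hjk])
      obtain ⟨r, hr⟩ := (residue_eq_iff _ _).mp h2
      rw [show j = k + s * r by linarith, quasiperiodic_mul hadd] at hjk
      have h3 : (s : ℤ) * r = 0 := by linarith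
      linarith
    · intro l
      have h2 : residue s l = residue s (F ((σ.symm (residue s l) : Fin s) : ℕ)) := by
        rw [hres, residue_natCast, Equiv.apply_symm_apply]
      obtain ⟨r, hr⟩ := (residue_eq_iff _ _).mp h2
      refine ⟨((σ.symm (residue s l) : Fin s) : ℕ) + s * r, ?_⟩
      rw [quasiperiodic_mul hadd]
      linarith
  refine ⟨Equiv.ofBijective F hbij, ⟨hadd, hneg⟩, fun i => ?_, ?_⟩
  · change residue s (F (i : ℕ)) = σ i
    rw [hres, residue_natCast]
  · apply congrFun
    refine eq_of_eq_on_fin (s := s) (c := t) (fun k => ?_) hz.1 fun i => ?_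
    · change y (F (k + s)) = y (F k) + t
      rw [hadd, hy.1]
    · change y (F (i : ℕ)) = z (i : ℕ)
      rw [hval, quasiperiodic_mul hy.1, ← hn]
      ring

lemma apply_symmPerm_le {s : ℕ} (hs : 0 < s) {y : ℤ → ℤ}
    (hmono : Monotone y) {w : Equiv.Perm ℤ} (hw : w ∈ SymmPerm s)
    (hyw : Monotone fun k => y (w k)) (k : ℤ) : y (w k) ≤ y k := by
  by_contra! hlt
  have h1 : ∀ j, k ≤ j → k < w j := by
    intro j hj
    by_contra! hle
    have h2 : y (w k) ≤ y (w j) := hyw hj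
    have h3 := hmono hle
    omega
  have hq : 0 ≤ (s - 1 : ℤ) * |2 * k + 1| := mul_nonneg (by omega) (abs_nonneg _)
  have hq' := le_abs_self (2 * k + 1)
  set q := |2 * k + 1|
  have hN : k ≤ -1 - k + s * q := by linarith
  have h2 : ∀ j, j ≤ -1 - k + s * q → w j < -1 - k + s * q := by
    intro j hj
    have h3 := h1 (-1 - j + s * q) (by linarith)
    rw [quasiperiodic_mul hw.1, hw.2] at h3
    linarith
  have h3 := Finset.card_le_card_of_injOn (s := Finset.Icc k (-1 - k + s * q))
    (t := Finset.Icc (k + 1) (-1 - k + s * q - 1)) w (fun j hj => by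
      simp only [Finset.coe_Icc, Set.mem_Icc] at hj ⊢
      have := h1 j hj.1
      have := h2 j hj.2
      omega) w.injective.injOn
  rw [Int.card_Icc, Int.card_Icc] at h3
  omega

/-- Two monotone functions in the same orbit of the affine hyperoctahedral group are equal. -/
lemma monotone_symmFun_unique {s t : ℕ} (hs : 0 < s) {y z : ℤ → ℤ} (hy : y ∈ SymmFun s t)
    (hz : z ∈ SymmFun s t) (hymono : Monotone y) (hzmono : Monotone z) {w : Equiv.Perm ℤ}
    (hw : w ∈ SymmPerm s) (h : ∀ k, y (w k) = z k) : y = z := by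
  have hle : ∀ k, z k ≤ y k := by
    intro k
    rw [← h]
    exact apply_symmPerm_le hs hymono hw (by simpa only [h] using hzmono) k
  funext k
  have h1 := hle k
  have h2 := hle (-1 - k)
  rw [hz.2, hy.2] at h2
  omega

/-- The functions `Fin s → ZMod t` that are antisymmetric under reversal. -/
abbrev ResidueFun (s t : ℕ) : Type :=
  {z : Fin s → ZMod t // (∀ i, z i.rev = -z i) ∧ ∀ i, i.rev = i → z i = 0}

/-- The finite hyperoctahedral group: the permutations of `Fin s` commuting with reversal. -/
abbrev RevCentralizer (s : ℕ) : Subgroup (Equiv.Perm (Fin s)) :=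
  Subgroup.centralizer {Fin.revPerm}

lemma mem_revCentralizer_iff {s : ℕ} (σ : Equiv.Perm (Fin s)) :
    σ ∈ RevCentralizer s ↔ ∀ i, σ i.rev = (σ i).rev := by
  rw [Subgroup.mem_centralizer_singleton_iff, Equiv.ext_iff]
  rfl

lemma rev_inv_apply {s : ℕ} (σ : RevCentralizer s) (i : Fin s) :
    (σ : Equiv.Perm (Fin s))⁻¹ i.rev = ((σ : Equiv.Perm (Fin s))⁻¹ i).rev :=
  (mem_revCentralizer_iff _).mp (σ⁻¹).2 i

instance residueFunAction (s t : ℕ) : MulAction (RevCentralizer s) (ResidueFun s t) where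
  smul σ z := ⟨fun i => z.1 ((σ : Equiv.Perm (Fin s))⁻¹ i), fun i => by
      beta_reduce
      rw [rev_inv_apply, z.2.1], fun i hi => z.2.2 _ (by rw [← rev_inv_apply, hi])⟩
  one_smul _ := rfl
  mul_smul _ _ _ := rfl

lemma smul_residueFun_val {s t : ℕ} (σ : RevCentralizer s) (z : ResidueFun s t) (i : Fin s) :
    (σ • z).1 i = z.1 ((σ : Equiv.Perm (Fin s))⁻¹ i) := rfl

lemma smul_residueFun_eq_iff {s t : ℕ} (σ : RevCentralizer s) (z z' : ResidueFun s t) :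
    σ • z = z' ↔ ∀ i, z'.1 ((σ : Equiv.Perm (Fin s)) i) = z.1 i := by
  constructor
  · rintro rfl i
    rw [smul_residueFun_val]
    exact congrArg z.1 (Equiv.symm_apply_apply _ i)
  · intro h
    apply Subtype.ext
    funext i
    rw [smul_residueFun_val, ← h]
    exact congrArg z'.1 (Equiv.apply_symm_apply _ i)

/-- Reduction modulo `t` of a function, restricted to a window. -/
def reduceFun {s t : ℕ} (y : ℤ → ℤ) (hy : y ∈ SymmFun s t) : ResidueFun s t :=
  ⟨fun i => (y (i : ℕ) : ℤ), fun i => by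
    beta_reduce
    rw [symmFun_rev hy, Int.cast_neg], fun i hi => by
    have h1 := symmFun_rev hy i
    rw [hi] at h1
    beta_reduce
    rw [show y (i : ℕ) = 0 by omega, Int.cast_zero]⟩

lemma reduceFun_val {s t : ℕ} (y : ℤ → ℤ) (hy : y ∈ SymmFun s t) (i : Fin s) :
    (reduceFun y hy).1 i = ((y (i : ℕ) : ℤ) : ZMod t) := rfl

lemma card_residueFun (s t : ℕ) : Nat.card (ResidueFun s t) = t ^ (s / 2) := by
  have hbij : Function.Bijective (fun (z : ResidueFun s t) (i : Fin (s / 2)) =>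
      z.1 ⟨i, by omega⟩) := by
    constructor
    · intro z z' h
      have h1 : ∀ i : Fin s, (i : ℕ) < s / 2 → z.1 i = z'.1 i :=
        fun i hi => congrFun h ⟨i, hi⟩
      apply Subtype.ext
      funext i
      rcases lt_trichotomy i i.rev with hlt | heq | hgt
      · apply h1
        rw [Fin.lt_def, Fin.val_rev] at hlt
        omega
      · rw [z.2.2 i heq.symm, z'.2.2 i heq.symm]
      · rw [← neg_inj, ← z.2.1, ← z'.2.1]
        apply h1
        rw [Fin.lt_def, Fin.val_rev] at hgt
        rw [Fin.val_rev]
        omega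
    · intro v
      refine ⟨⟨fun i => if h : (i : ℕ) < s / 2 then v ⟨i, h⟩ else
        if h : (i.rev : ℕ) < s / 2 then -v ⟨i.rev, h⟩ else 0, ?_, ?_⟩, ?_⟩
      · intro i
        by_cases h1 : (i : ℕ) < s / 2 <;> by_cases h2 : (i.rev : ℕ) < s / 2
        · have := Fin.val_rev i
          omega
        · simp only [h1, h2, dif_pos, dif_neg, Fin.rev_rev, not_false_iff]
        · simp only [h1, h2, dif_pos, dif_neg, not_false_iff, neg_neg]
        · simp only [h1, h2, dif_neg, Fin.rev_rev, not_false_iff, neg_zero]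
      · intro i hi
        have := Fin.val_rev i
        rw [hi] at this
        have h1 : ¬ (i : ℕ) < s / 2 := by omega
        simp only [hi, h1, dif_neg, not_false_iff]
      · funext i
        simp
  rw [Nat.card_eq_of_bijective _ hbij, Nat.card_fun]
  simp

lemma card_revCentralizer {s : ℕ} (hs : 2 ≤ s) :
    Nat.card (RevCentralizer s) = 2 ^ (s / 2) * Nat.factorial (s / 2) := by
  have hne : (Fin.revPerm : Equiv.Perm (Fin s)) ≠ 1 := by
    intro h
    have h1 := congrArg Fin.val (Equiv.ext_iff.mp h ⟨0, by omega⟩)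
    simp at h1
    omega
  have horder : orderOf (Fin.revPerm : Equiv.Perm (Fin s)) = 2 := by
    refine orderOf_eq_prime ?_ hne
    ext i
    simp [sq]
  obtain ⟨n, hn⟩ := Equiv.Perm.cycleType_prime_order
    (σ := (Fin.revPerm : Equiv.Perm (Fin s))) (by rw [horder]; exact Nat.prime_two)
  rw [horder] at hn
  have hsum := Equiv.Perm.sum_cycleType (Fin.revPerm : Equiv.Perm (Fin s))
  rw [hn, Multiset.sum_replicate, smul_eq_mul] at hsum
  have hle : (Fin.revPerm : Equiv.Perm (Fin s)).support.card ≤ s := by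
    simpa using Finset.card_le_univ (Fin.revPerm : Equiv.Perm (Fin s)).support
  have hcompl : (Fin.revPerm : Equiv.Perm (Fin s)).supportᶜ.card ≤ 1 := by
    rw [Finset.card_le_one]
    intro i hi j hj
    rw [Finset.mem_compl, Equiv.Perm.notMem_support, Fin.revPerm_apply, Fin.ext_iff,
      Fin.val_rev] at hi hj
    omega
  rw [Finset.card_compl, Fintype.card_fin] at hcompl
  have hn' : n + 1 = s / 2 := by omega
  rw [Equiv.Perm.nat_card_centralizer, hn, Multiset.sum_replicate, Multiset.prod_replicate,
    Multiset.toFinset_replicate, if_neg (by omega), Finset.prod_singleton,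
    Multiset.count_replicate_self, hn', Fintype.card_fin, smul_eq_mul]
  have h01 : s - s / 2 * 2 = 0 ∨ s - s / 2 * 2 = 1 := by omega
  rcases h01 with h | h <;> rw [h] <;> simp

/-- Each antisymmetric residue function is a rearrangement of a monotone function. -/
lemma exists_monotone_reduceFun {s t : ℕ} [NeZero s] (ht : 0 < t) (z : ResidueFun s t) :
    ∃ (y : ℤ → ℤ) (hy : y ∈ SymmFun s t) (σ : RevCentralizer s),
      Monotone y ∧ σ • reduceFun y hy = z := by
  have : NeZero t := ⟨ht.ne'⟩
  have hs : 0 < s := Nat.pos_of_neZero s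
  set η : Fin s → ℤ := fun i =>
    if i < i.rev then (z.1 i).valMinAbs else -(z.1 i.rev).valMinAbs with hη
  have hcast : ∀ i, ((η i : ℤ) : ZMod t) = z.1 i := by
    intro i
    simp only [hη]
    split_ifs
    · exact ZMod.coe_valMinAbs _
    · rw [Int.cast_neg, ZMod.coe_valMinAbs, z.2.1, neg_neg]
  have hrev : ∀ i, η i.rev = -η i := by
    intro i
    simp only [hη, Fin.rev_rev]
    rcases lt_trichotomy i i.rev with hlt | heq | hgt
    · rw [if_pos hlt, if_neg hlt.asymm]
    · have h0 := z.2.2 i heq.symm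
      rw [← heq, if_neg (lt_irrefl i), h0]
      simp
    · rw [if_pos hgt, if_neg hgt.asymm, neg_neg]
  have hbound : ∀ i, |η i * 2| ≤ t := by
    intro i
    have h1 : ∀ x : ZMod t, |x.valMinAbs * 2| ≤ t := by
      intro x
      have := x.valMinAbs_mem_Ioc
      rw [abs_le]
      exact ⟨this.1.le, this.2⟩
    simp only [hη]
    split_ifs
    · exact h1 _
    · rw [neg_mul, abs_neg]
      exact h1 _
  have hsort := (Tuple.eq_sort_iff (f := η)).mp rfl
  set σ := Tuple.sort η
  have hσ : ∀ i, σ i.rev = (σ i).rev := by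
    have h1 : Fin.revPerm * σ * Fin.revPerm = σ := by
      refine Tuple.eq_sort_iff.mpr ⟨fun i j hij => ?_, fun i j hij h => ?_⟩
      · have h2 := hsort.1 (Fin.rev_le_rev.mpr hij)
        simp only [Function.comp_apply, Equiv.Perm.mul_apply, Fin.revPerm_apply, hrev] at h2 ⊢
        omega
      · simp only [Equiv.Perm.mul_apply, Fin.revPerm_apply, hrev, Fin.rev_lt_rev] at h ⊢
        exact hsort.2 _ _ (Fin.rev_lt_rev.mpr hij) (by omega)
    intro i
    conv_lhs => rw [← h1]
    simp
  have hηrev : ∀ i, η (σ i.rev) = -η (σ i) := fun i => by rw [hσ, hrev]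
  refine ⟨quasiExtend s t (η ∘ σ), quasiExtend_symmFun hηrev, ⟨σ, (mem_revCentralizer_iff _).mpr hσ⟩,
    monotone_int_of_le_succ fun k => ?_, ?_⟩
  · have hk := residue_add_mul_ediv (s := s) k
    generalize residue s k = i at hk
    generalize k / s = r at hk
    subst hk
    have e : ((i : ℕ) : ℤ) + s * r + 1 = ((i : ℕ) + 1) + s * r := by ring
    rw [e, quasiperiodic_mul (quasiExtend_add _ _), quasiperiodic_mul (quasiExtend_add _ _),
      quasiExtend_natCast, add_le_add_iff_right]
    by_cases hi : (i : ℕ) + 1 < s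
    · have h1 := quasiExtend_natCast (t : ℤ) (η ∘ σ) ⟨(i : ℕ) + 1, hi⟩
      push_cast at h1
      rw [h1]
      exact hsort.1 (by rw [Fin.le_def]; exact Nat.le_succ _)
    · have h1 := quasiExtend_natCast (t : ℤ) (η ∘ σ) ⟨0, hs⟩
      have h2 := quasiExtend_add (t : ℤ) (η ∘ σ) 0
      push_cast at h1
      rw [h1] at h2
      rw [show ((i : ℕ) : ℤ) + 1 = 0 + s by omega, h2]
      have h3 := abs_le.mp (hbound (σ i))
      have h4 := abs_le.mp (hbound (σ ⟨0, hs⟩))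
      simp only [Function.comp_apply]
      omega
  · rw [smul_residueFun_eq_iff]
    intro i
    rw [reduceFun_val, quasiExtend_natCast]
    exact (hcast _).symm

lemma card_stabilizer_reduceFun {s t : ℕ} [NeZero s] (ht : 0 < t) {y : ℤ → ℤ}
    (hy : y ∈ SymmFun s t) :
    Nat.card {w : Equiv.Perm ℤ // w ∈ SymmPerm s ∧ ∀ k, y (w k) = y k} =
      Nat.card (MulAction.stabilizer (RevCentralizer s) (reduceFun y hy)) := by
  have hmem : ∀ w : {w : Equiv.Perm ℤ // w ∈ SymmPerm s ∧ ∀ k, y (w k) = y k},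
      (⟨residuePerm w.1 w.2.1.1, (mem_revCentralizer_iff _).mpr (residuePerm_rev w.2.1)⟩ :
        RevCentralizer s) ∈ MulAction.stabilizer (RevCentralizer s) (reduceFun y hy) := by
    intro w
    rw [MulAction.mem_stabilizer_iff, smul_residueFun_eq_iff]
    intro i
    rw [reduceFun_val, reduceFun_val, residuePerm_apply, apply_residue_cast hy.1, w.2.2]
  refine Nat.card_eq_of_bijective (fun w => ⟨_, hmem w⟩) ⟨?_, ?_⟩
  · rintro ⟨w, hw, hyw⟩ ⟨v, hv, hyv⟩ h
    have h0 := congrArg (fun σ : MulAction.stabilizer (RevCentralizer s) (reduceFun y hy) =>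
      ((σ : RevCentralizer s) : Equiv.Perm (Fin s))) h
    have h1 : ∀ i : Fin s, residue s (w (i : ℕ)) = residue s (v (i : ℕ)) :=
      fun i => Equiv.ext_iff.mp h0 i
    apply Subtype.ext
    apply DFunLike.coe_injective
    refine eq_of_eq_on_fin hw.1 hv.1 fun i => ?_
    obtain ⟨r, hr⟩ := (residue_eq_iff _ _).mp (h1 i)
    have h2 := hyw (i : ℕ)
    rw [show w (i : ℕ) = v (i : ℕ) + s * r by linarith, quasiperiodic_mul hy.1, hyv] at h2
    have h3 : r = 0 := by
      have : (t : ℤ) * r = 0 := by linarith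
      rcases mul_eq_zero.mp this with h4 | h4
      · omega
      · exact h4
    rw [h3] at hr
    linarith
  · rintro ⟨σ, hσ⟩
    rw [MulAction.mem_stabilizer_iff, smul_residueFun_eq_iff] at hσ
    obtain ⟨w, hw, hres, hyw⟩ := exists_symmPerm_lift ht hy hy
      ((mem_revCentralizer_iff _).mp σ.2) hσ
    refine ⟨⟨w, hw, hyw⟩, ?_⟩
    apply Subtype.ext
    apply Subtype.ext
    exact Equiv.ext hres

lemma sum_inv_card_stabilizer (G X : Type*) [Group G] [Finite G] [MulAction G X] [Finite X] :
    ∑ᶠ ω : MulAction.orbitRel.Quotient G X, (1 : ℚ) / Nat.card (MulAction.stabilizer G ω.out) =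
      Nat.card X / Nat.card G := by
  classical
  have := Fintype.ofFinite G
  have := Fintype.ofFinite X
  have h := MulAction.card_eq_sum_card_group_div_card_stabilizer G X
  have hG : (Fintype.card G : ℚ) ≠ 0 := by exact_mod_cast Fintype.card_ne_zero
  rw [finsum_eq_sum_of_fintype, Nat.card_eq_fintype_card, Nat.card_eq_fintype_card,
    eq_div_iff hG, Finset.sum_mul, h, Nat.cast_sum]
  refine Finset.sum_congr rfl fun ω _ => ?_
  have hdvd := Subgroup.card_subgroup_dvd_card (MulAction.stabilizer G ω.out)
  rw [Nat.card_eq_fintype_card, Nat.card_eq_fintype_card] at hdvd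
  rw [Nat.cast_div hdvd (by exact_mod_cast Fintype.card_ne_zero), Nat.card_eq_fintype_card]
  ring

/-- The sum over all self-conjugate `(s,t)`-cores of the reciprocals of the orders of
their stabilisers under the level `t` action of `H̃_s` equals `t^u/(2^u · u!)`,
with `u = ⌊s/2⌋`. -/
theorem denom_sum_sc (s t : ℕ) (hs : 2 ≤ s) (ht : 0 < t) (hst : Nat.Coprime s t)
    (Φ : Equiv.Perm ℤ → Equiv.Perm ℤ) (hΦ : IsLevelTAction s t hs Φ) :
    (∑ᶠ p ∈ {p : Partn | SelfConj p ∧ IsCore s p ∧ IsCore t p},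
        (1 : ℚ) / (Nat.card {w : Equiv.Perm ℤ //
          (w ∈ AffSymSet s ∧ ∀ m : ℤ, w (-1 - m) = -1 - w m) ∧
          ⇑(Φ w) '' sSet s p = sSet s p})) =
      (t : ℚ) ^ (s / 2) / (2 ^ (s / 2) * Nat.factorial (s / 2)) := by
  classical
  have : NeZero s := ⟨by omega⟩
  have : NeZero t := ⟨ht.ne'⟩
  have hs0 : 0 < s := by omega
  set C : Set Partn := {p : Partn | SelfConj p ∧ IsCore s p ∧ IsCore t p} with hC
  have hex : ∀ p : C, ∃ y ∈ SymmFun s t, Monotone y ∧ betaSet p.1 = coreBeta s t y :=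
    fun p => exists_symmFun_of_core hs0 ht hst p.2.1 p.2.2.1 p.2.2.2
  choose y hy hmono hbeta using hex
  have hbij : Function.Bijective (fun p : C =>
      (Quotient.mk'' (reduceFun (y p) (hy p)) :
        MulAction.orbitRel.Quotient (RevCentralizer s) (ResidueFun s t))) := by
    constructor
    · intro p p' h
      have h1 := MulAction.orbitRel_apply.mp (Quotient.exact h)
      obtain ⟨σ, hσ⟩ := h1
      obtain ⟨w, hw, -, hyw⟩ := exists_symmPerm_lift ht (hy p) (hy p')
        ((mem_revCentralizer_iff _).mp σ.2) ((smul_residueFun_eq_iff σ _ _).mp hσ)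
      have h2 := monotone_symmFun_unique hs0 (hy p) (hy p') (hmono p) (hmono p') hw hyw
      apply Subtype.ext
      apply betaSet_injective
      rw [hbeta, hbeta, h2]
    · intro ω
      induction ω using Quotient.inductionOn' with
      | h z =>
        obtain ⟨x, hx, σ, hxmono, rfl⟩ := exists_monotone_reduceFun ht z
        obtain ⟨p, hp, hpbeta⟩ := exists_core_of_symmFun hs0 ht hst hx hxmono
        refine ⟨⟨p, hp⟩, Quotient.sound' ?_⟩
        have h1 : y ⟨p, hp⟩ = x := by
          apply coreBeta_injective hs0 hst (hy _).1 hx.1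
          rw [← hbeta, hpbeta]
        subst h1
        exact MulAction.orbitRel_apply.mpr ⟨σ⁻¹, inv_smul_smul _ _⟩
  rw [← finsum_set_coe_eq_finsum_mem C, finsum_eq_of_bijective _ hbij (g := fun ω =>
    (1 : ℚ) / Nat.card (MulAction.stabilizer (RevCentralizer s) ω.out)),
    sum_inv_card_stabilizer, card_residueFun, card_revCentralizer hs]
  · push_cast
    rfl
  · intro p
    have h1 : MulAction.orbitRel (RevCentralizer s) (ResidueFun s t)
        (Quotient.out (Quotient.mk'' (reduceFun (y p) (hy p)) :
          MulAction.orbitRel.Quotient (RevCentralizer s) (ResidueFun s t)))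
        (reduceFun (y p) (hy p)) := Quotient.mk_out _
    rw [Nat.card_congr (MulAction.stabilizerEquivStabilizerOfOrbitRel h1).toEquiv,
      ← card_stabilizer_reduceFun ht (hy p)]
    congr 2
    refine Nat.card_congr (Equiv.subtypeEquivRight fun w => ?_)
    rw [mem_symmPerm_iff]
    refine and_congr_right fun hw => ?_
    exact image_sSet_eq_iff hs hst hΦ (hy p).1 (hbeta p) ((mem_symmPerm_iff w).mpr hw).1
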